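/- Let G be a finite group which is a central product G = MC, where M ≅ SL(2,5), C is a subgroup commuting elementwise with M, and M ∩ C = Z(M) (the center of M, of order 2).reach Then the average of the degrees of the irreducible complex characters of G is at least 16/5. -/

import Mathlib

open CategoryTheory

/-- The set of irreducible complex characters of `G`: characters of simple
finite-dimensional complex representations of `G`. -/
noncomputable def IrrChar (G : Type) [Group G] : Set (G → ℂ) :=
  {χ | ∃ V : FDRep ℂ G, Simple V ∧ χ = fun g => V.character g}

/-- The degree of a character, read off from its value at `1`. -/
noncomputable def charDeg {G : Type} [Group G] (χ : G → ℂ) : ℕ :=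
  ⌊(χ 1).re⌋₊

/-- The average degree of the irreducible characters of `G` satisfying a
predicate `p` (with the convention that the average of the empty set is `0`). -/
noncomputable def acdRel (G : Type) [Group G] (p : (G → ℂ) → Prop) : ℝ :=
  (∑ᶠ χ ∈ {χ ∈ IrrChar G | p χ}, (charDeg χ : ℝ)) /
    ({χ ∈ IrrChar G | p χ} : Set (G → ℂ)).ncard

/-- The average character degree of `G`. -/
noncomputable def acd (G : Type) [Group G] : ℝ := acdRel G fun _ => True

/-!
A central product `G = MC` with `M ≅ SL(2, 5)` is a quotient of `SL(2, 5) × C`, so its irreducible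
characters are the external products `α ⊠ β` that are constant on the kernel. Elements of the kernel
have first component `±1`, so for fixed `β` this condition only depends on the sign
`α (-1) / α 1`. Since `β` only increases the degree, it suffices that for either sign the average of
`α 1` is at least `16 / 5`.

For either sign the squares of the degrees sum to `60`. Up to conjugation and sign `SL(2, 5)` has
five elements, so there are at most five even characters; there are at most four odd ones, because
one of the five elements is conjugate to its negative and odd characters vanish on it. As `SL(2, 5)`
is perfect, its representations have determinant `1`, so only the trivial character has degree `1`,
and odd characters have even degree. These constraints imply the two bounds; the even degrees
`1, 3, 3, 4, 5` attain `16 / 5`.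
-/

theorem card_le_card_of_forall_eq_mul {X k : Type*} [Field k] {S : Finset (X → k)}
    (hS : LinearIndepOn k id (S : Set (X → k))) {R : Finset X}
    (hR : ∀ x, ∃ y ∈ R, ∃ s, ∀ f ∈ S, f x = s * f y) : S.card ≤ R.card := by
  have hspan : ∀ x, ∃ y ∈ R, ∃ s, ∀ f ∈ Submodule.span k (S : Set (X → k)), f x = s * f y := by
    intro x
    obtain ⟨y, hy, s, hs⟩ := hR x
    refine ⟨y, hy, s, fun f hf => ?_⟩
    induction hf using Submodule.span_induction with
    | mem f hf => exact hs f hf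
    | zero => simp
    | add f g _ _ hf hg => simp only [Pi.add_apply, hf, hg, mul_add]
    | smul c f _ hf => simp only [Pi.smul_apply, smul_eq_mul, hf, mul_left_comm]
  have hker : Disjoint (Submodule.span k (S : Set (X → k)))
      (LinearMap.ker (LinearMap.funLeft k k ((↑) : R → X))) := by
    rw [Submodule.disjoint_def]
    intro f hf hf0
    ext x
    obtain ⟨y, hy, s, hs⟩ := hspan x
    rw [hs f hf, show f y = 0 from congrFun hf0 ⟨y, hy⟩, mul_zero, Pi.zero_apply]
  have hli : LinearIndependent k fun f : S => LinearMap.funLeft k k ((↑) : R → X) f :=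
    LinearIndependent.map hS (by simpa using hker)
  simpa using hli.fintype_card_le_finrank

theorem sum_filter_nonneg_of_forall_iff {ι : Type*} {S : Finset ι} {f : ι → ℝ} {P : ι → Prop}
    {_ : DecidablePred P} (hP : ∀ i ∈ S, ∀ j ∈ S, P i ↔ P j) (hf : 0 ≤ ∑ i ∈ S, f i) :
    0 ≤ ∑ i ∈ S with P i, f i := by
  by_cases h : ∃ i ∈ S, P i
  · obtain ⟨i, hi, hPi⟩ := h
    rwa [Finset.filter_true_of_mem fun j hj => (hP i hi j hj).1 hPi]
  · rw [Finset.filter_false_of_mem fun i hi hPi => h ⟨i, hi, hPi⟩, Finset.sum_empty]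

/-! ### Characters and orthogonality -/

open Representation Module

theorem natCard_cast_ne_zero {H : Type} [Nonempty H] [Finite H] : (Nat.card H : ℂ) ≠ 0 :=
  Nat.cast_ne_zero.2 Nat.card_pos.ne'

noncomputable local instance {H : Type} [Nonempty H] [Finite H] : Invertible (Nat.card H : ℂ) :=
  invertibleOfNonzero natCard_cast_ne_zero

section CharacterTheory

attribute [local instance] Fintype.ofFinite

variable {H : Type} [Group H]

/-- The functions on `H` afforded by finite-dimensional complex representations, irreducible or
not. -/
def IsCharacter (χ : H → ℂ) : Prop :=
  ∃ (V : Type) (_ : AddCommGroup V) (_ : Module ℂ V) (_ : FiniteDimensional ℂ V)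
    (ρ : Representation ℂ H V), χ = ρ.character

theorem IsCharacter.apply_eq_of_isConj {χ : H → ℂ} (hχ : IsCharacter χ) {g h : H}
    (hgh : IsConj g h) : χ g = χ h := by
  obtain ⟨V, _, _, _, ρ, rfl⟩ := hχ
  obtain ⟨c, rfl⟩ := isConj_iff.1 hgh
  rw [char_conj]

theorem isCharacter_of_mem_irrChar {χ : H → ℂ} (hχ : χ ∈ IrrChar H) : IsCharacter χ := by
  obtain ⟨V, -, rfl⟩ := hχ
  exact ⟨V, inferInstance, inferInstance, inferInstance, V.ρ, rfl⟩

theorem IsCharacter.apply_one {χ : H → ℂ} (hχ : IsCharacter χ) : χ 1 = charDeg χ := by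
  obtain ⟨V, _, _, _, ρ, rfl⟩ := hχ
  simp [charDeg]

theorem apply_one_eq_charDeg {χ : H → ℂ} (hχ : χ ∈ IrrChar H) : χ 1 = charDeg χ :=
  (isCharacter_of_mem_irrChar hχ).apply_one

theorem apply_eq_one_of_commutator_eq_top {N : Type*} [CommMonoid N] (hH : commutator H = ⊤)
    (f : H →* N) (g : H) : f g = 1 := by
  have hker := Abelianization.commutator_subset_ker f.toHomUnits (hH ▸ Subgroup.mem_top g)
  exact congrArg Units.val (MonoidHom.mem_ker.1 hker)

theorem det_eq_one_of_commutator_eq_top {V : Type} [AddCommGroup V] [Module ℂ V]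
    (hH : commutator H = ⊤) (ρ : Representation ℂ H V) (g : H) : LinearMap.det (ρ g) = 1 :=
  apply_eq_one_of_commutator_eq_top hH (LinearMap.det.comp ρ) g

theorem eq_one_of_charDeg_eq_one {χ : H → ℂ} (hH : commutator H = ⊤)
    (hχ : IsCharacter χ) (hdeg : charDeg χ = 1) : χ = 1 := by
  have hone := hχ.apply_one
  obtain ⟨V, _, _, _, ρ, rfl⟩ := hχ
  have hV : finrank ℂ V = 1 := by
    rw [char_one, hdeg] at hone
    exact_mod_cast hone
  ext g
  obtain ⟨c, hc, -⟩ := LinearMap.existsUnique_eq_smul_id_of_finrank_eq_one hV (ρ g)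
  have hdet := det_eq_one_of_commutator_eq_top hH ρ g
  rw [hc, LinearMap.det_smul, hV, pow_one, LinearMap.det_id, mul_one] at hdet
  rw [character, hc, hdet, one_smul, LinearMap.trace_id, hV, Nat.cast_one, Pi.one_apply]

theorem character_eq_add_of_isCompl {V : Type} [AddCommGroup V] [Module ℂ V]
    [FiniteDimensional ℂ V] {ρ : Representation ℂ H V} {W W' : Subrepresentation ρ}
    (hW : IsCompl W.toSubmodule W'.toSubmodule) :
    ρ.character = W.toRepresentation.character + W'.toRepresentation.character := by
  ext g
  let e := Submodule.prodEquivOfIsCompl _ _ hW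
  have hconj : ρ g = e.conj (LinearMap.prodMap (W.toRepresentation g) (W'.toRepresentation g)) := by
    rw [LinearEquiv.conj_apply, LinearEquiv.eq_comp_toLinearMap_symm]
    refine LinearMap.ext fun x => ?_
    simp [e, Subrepresentation.toRepresentation]
  simp only [Pi.add_apply, character]
  rw [hconj, LinearMap.trace_conj', LinearMap.trace_prodMap']

theorem exists_isCompl_of_not_isIrreducible [Finite H] {V : Type} [AddCommGroup V] [Module ℂ V]
    [Nontrivial V] {ρ : Representation ℂ H V} (hρ : ¬ IsIrreducible ρ) :
    ∃ W W' : Subrepresentation ρ, W.toSubmodule ≠ ⊥ ∧ W'.toSubmodule ≠ ⊥ ∧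
      IsCompl W.toSubmodule W'.toSubmodule := by
  have : Nontrivial (Subrepresentation ρ) :=
    ⟨⊥, ⊤, fun h => bot_ne_top (congrArg Subrepresentation.toSubmodule h)⟩
  obtain ⟨W, hbot, htop⟩ : ∃ W : Subrepresentation ρ, W ≠ ⊥ ∧ W ≠ ⊤ := by
    by_contra! h
    exact hρ ⟨fun W => or_iff_not_imp_left.2 (h W)⟩
  obtain ⟨W', hW⟩ := exists_isCompl W
  have hinj := Subrepresentation.toSubmodule_injective (ρ := ρ)
  have hbot' : W' ≠ ⊥ := fun h => htop (eq_top_of_isCompl_bot (h ▸ hW))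
  refine ⟨W, W', hinj.ne hbot, hinj.ne hbot', ?_⟩
  rw [isCompl_iff, disjoint_iff, codisjoint_iff, ← Subrepresentation.toSubmodule_inf,
    ← Subrepresentation.toSubmodule_sup, hW.inf_eq_bot, hW.sup_eq_top]
  exact ⟨rfl, rfl⟩

variable [Finite H]

/-- The scalar product `|H|⁻¹ ∑ g, φ g * ψ g⁻¹`. On characters it agrees with the usual hermitian
product, but it is bilinear. -/
noncomputable def charInner : LinearMap.BilinForm ℂ (H → ℂ) :=
  LinearMap.mk₂ ℂ (fun φ ψ => (Nat.card H : ℂ)⁻¹ * ∑ g, φ g * ψ g⁻¹)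
    (fun φ φ' ψ => by simp [add_mul, Finset.sum_add_distrib, mul_add])
    (fun c φ ψ => by simp [mul_assoc, Finset.mul_sum, mul_left_comm c])
    (fun φ ψ ψ' => by simp [Finset.sum_add_distrib, mul_add])
    (fun c φ ψ => by simp [Finset.mul_sum, mul_left_comm c])

theorem charInner_apply (φ ψ : H → ℂ) :
    charInner φ ψ = (Nat.card H : ℂ)⁻¹ * ∑ g, φ g * ψ g⁻¹ := rfl

theorem charInner_character {V W : Type} [AddCommGroup V] [Module ℂ V] [FiniteDimensional ℂ V]
    [AddCommGroup W] [Module ℂ W] [FiniteDimensional ℂ W]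
    (ρ : Representation ℂ H V) (σ : Representation ℂ H W) :
    charInner σ.character ρ.character = finrank ℂ (IntertwiningMap ρ σ) :=
  card_inv_mul_sum_char_mul_char_eq_finrank ρ σ

theorem mem_irrChar_iff {χ : H → ℂ} :
    χ ∈ IrrChar H ↔ IsCharacter χ ∧ charInner χ χ = 1 := by
  have norm_one_iff (V : FDRep ℂ H) : charInner V.character V.character = 1 ↔ Simple V := by
    rw [FDRep.simple_iff_char_is_norm_one, charInner_apply, inv_mul_eq_one₀ natCard_cast_ne_zero,
      eq_comm]
  constructor
  · intro h
    refine ⟨isCharacter_of_mem_irrChar h, ?_⟩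
    obtain ⟨V, hV, rfl⟩ := h
    exact (norm_one_iff V).2 hV
  · rintro ⟨⟨V, _, _, _, ρ, rfl⟩, h⟩
    exact ⟨FDRep.of ρ, (norm_one_iff (FDRep.of ρ)).1 h, rfl⟩

theorem charInner_eq_zero_of_ne {χ ψ : H → ℂ} (hχ : χ ∈ IrrChar H) (hψ : ψ ∈ IrrChar H)
    (hne : χ ≠ ψ) : charInner χ ψ = 0 := by
  obtain ⟨V, _, rfl⟩ := hχ
  obtain ⟨W, _, rfl⟩ := hψ
  exact (FDRep.char_orthonormal V W).trans (if_neg fun ⟨i⟩ => hne (FDRep.char_iso i))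

theorem linearIndepOn_irrChar : LinearIndepOn ℂ id (IrrChar H) :=
  charInner.linearIndependent_of_isOrthoᵢ
    (fun χ ψ hne => charInner_eq_zero_of_ne χ.2 ψ.2 (Subtype.coe_ne_coe.2 hne))
    (fun χ => by simp [(mem_irrChar_iff.1 χ.2).2])

theorem finrank_intertwiningMap_self_of_mem_irrChar {V : Type} [AddCommGroup V] [Module ℂ V]
    [FiniteDimensional ℂ V] {ρ : Representation ℂ H V} (hρ : ρ.character ∈ IrrChar H) :
    finrank ℂ (IntertwiningMap ρ ρ) = 1 := by
  exact_mod_cast (charInner_character ρ ρ).symm.trans (mem_irrChar_iff.1 hρ).2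

theorem character_mem_irrChar_of_isIrreducible {V : Type} [AddCommGroup V] [Module ℂ V]
    [FiniteDimensional ℂ V] (ρ : Representation ℂ H V) [IsIrreducible ρ] :
    ρ.character ∈ IrrChar H :=
  mem_irrChar_iff.2 ⟨⟨V, _, _, inferInstance, ρ, rfl⟩, by
    rw [charInner_character, IsIrreducible.finrank_intertwiningMap_self, Nat.cast_one]⟩

theorem IsCharacter.mem_span_irrChar {θ : H → ℂ} (hθ : IsCharacter θ) :
    θ ∈ Submodule.span ℂ (IrrChar H) := by
  obtain ⟨V, _, _, _, ρ, rfl⟩ := hθ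
  induction hn : finrank ℂ V using Nat.strong_induction_on generalizing V with
  | _ n ih =>
    rcases subsingleton_or_nontrivial V with hV | hV
    · have hzero : ρ.character = 0 := by
        ext g
        simp [character, Subsingleton.elim (ρ g) 0]
      exact hzero ▸ zero_mem _
    by_cases hρ : IsIrreducible ρ
    · exact Submodule.subset_span (character_mem_irrChar_of_isIrreducible ρ)
    · obtain ⟨W, W', hW, hW', hcompl⟩ := exists_isCompl_of_not_isIrreducible hρ
      have hdim := Submodule.finrank_add_eq_of_isCompl hcompl
      have hpos : 0 < finrank ℂ W.toSubmodule ∧ 0 < finrank ℂ W'.toSubmodule := by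
        simpa only [Module.finrank_pos_iff, Submodule.nontrivial_iff_ne_bot] using ⟨hW, hW'⟩
      have hlt : finrank ℂ W.toSubmodule < n := by omega
      have hlt' : finrank ℂ W'.toSubmodule < n := by omega
      rw [character_eq_add_of_isCompl hcompl]
      exact add_mem (ih _ hlt _ _ _ inferInstance W.toRepresentation rfl)
        (ih _ hlt' _ _ _ inferInstance W'.toRepresentation rfl)

theorem irrChar_finite : (IrrChar H).Finite :=
  LinearIndependent.setFinite linearIndepOn_irrChar

variable (H) in
/-- The irreducible characters of `H`, as a finset. -/
noncomputable def irr : Finset (H → ℂ) :=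
  (irrChar_finite (H := H)).toFinset

theorem mem_irr {χ : H → ℂ} : χ ∈ irr H ↔ χ ∈ IrrChar H := by
  simp [irr]

theorem eq_sum_charInner_smul {θ : H → ℂ} (hθ : IsCharacter θ) :
    θ = ∑ χ ∈ irr H, charInner θ χ • χ := by
  replace hθ := hθ.mem_span_irrChar
  induction hθ using Submodule.span_induction with
  | mem ψ hψ =>
    rw [Finset.sum_eq_single_of_mem ψ (mem_irr.2 hψ), (mem_irrChar_iff.1 hψ).2, one_smul]
    intro χ hχ hne
    rw [charInner_eq_zero_of_ne hψ (mem_irr.1 hχ) hne.symm, zero_smul]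
  | zero => simp
  | add φ ψ _ _ hφ hψ =>
    nth_rw 1 [hφ, hψ]
    simp only [map_add, LinearMap.add_apply, add_smul, Finset.sum_add_distrib]
  | smul c φ _ hφ =>
    nth_rw 1 [hφ]
    simp only [map_smul, LinearMap.smul_apply, smul_eq_mul, mul_smul, Finset.smul_sum]

open Classical in
variable (H) in
/-- The character of the regular representation of `H`. -/
noncomputable def regChar : H → ℂ := Pi.single 1 (Nat.card H : ℂ)

theorem isCharacter_regChar : IsCharacter (regChar H) := by
  classical
  let ρ : Representation ℂ H (H → ℂ) :=
    { toFun := fun g => LinearMap.funLeft ℂ ℂ (fun x => x * g)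
      map_one' := by ext; simp
      map_mul' := fun a b => by ext; simp [mul_assoc, LinearMap.funLeft] }
  refine ⟨H → ℂ, inferInstance, inferInstance, inferInstance, ρ, ?_⟩
  ext g
  rw [character, LinearMap.trace_eq_matrix_trace ℂ (Pi.basisFun ℂ H)]
  simp [ρ, regChar, Matrix.trace, LinearMap.funLeft, Pi.single_apply]

theorem charInner_regChar (φ : H → ℂ) : charInner (regChar H) φ = φ 1 := by
  classical
  simp [charInner_apply, regChar, Pi.single_apply]

theorem sum_apply_one_smul_eq_regChar : ∑ χ ∈ irr H, χ 1 • χ = regChar H := by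
  simpa only [charInner_regChar] using (eq_sum_charInner_smul (isCharacter_regChar (H := H))).symm

/-! ### Characters over a central element -/

theorem charDeg_pos {χ : H → ℂ} (hχ : χ ∈ IrrChar H) : 0 < charDeg χ := by
  obtain ⟨⟨V, _, _, _, ρ, rfl⟩, hnorm⟩ := mem_irrChar_iff.1 hχ
  refine Nat.pos_of_ne_zero fun hdeg => ?_
  have hV : (finrank ℂ V : ℂ) = 0 := by
    rw [← char_one ρ, (isCharacter_of_mem_irrChar hχ).apply_one, hdeg, Nat.cast_zero]
  have : Subsingleton V := finrank_zero_iff.1 (Nat.cast_eq_zero.1 hV)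
  have hzero : ρ.character = 0 := by
    ext g
    simp [character, Subsingleton.elim (ρ g) 0]
  simp [hzero] at hnorm

theorem apply_one_ne_zero {χ : H → ℂ} (hχ : χ ∈ IrrChar H) : χ 1 ≠ 0 := by
  rw [apply_one_eq_charDeg hχ]
  exact_mod_cast (charDeg_pos hχ).ne'

theorem one_mem_irrChar : (1 : H → ℂ) ∈ IrrChar H := by
  refine mem_irrChar_iff.2 ⟨⟨ℂ, inferInstance, inferInstance, inferInstance, trivial ℂ H ℂ, ?_⟩, ?_⟩
  · ext g
    simp [character]
  · simp [charInner_apply]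

theorem exists_apply_eq_smul_one_of_mem_center {V : Type} [AddCommGroup V] [Module ℂ V]
    [FiniteDimensional ℂ V] {ρ : Representation ℂ H V} (hρ : ρ.character ∈ IrrChar H) {z : H}
    (hz : z ∈ Subgroup.center H) : ∃ ω : ℂ, ρ z = ω • 1 := by
  have hid : (1 : IntertwiningMap ρ ρ) ≠ 0 := by
    intro h
    have hone : (1 : V →ₗ[ℂ] V) = 0 := congrArg IntertwiningMap.toLinearMap h
    apply apply_one_ne_zero hρ
    rw [character, map_one, hone, map_zero]
  obtain ⟨ω, hω⟩ := (finrank_eq_one_iff_of_nonzero' _ hid).1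
    (finrank_intertwiningMap_self_of_mem_irrChar hρ) (IntertwiningMap.centralMul ρ z hz)
  exact ⟨ω, (congrArg IntertwiningMap.toLinearMap hω).symm⟩

section Center

variable {χ : H → ℂ} {z : H}

theorem apply_one_mul_apply_center_mul (hχ : χ ∈ IrrChar H) (hz : z ∈ Subgroup.center H) (g : H) :
    χ 1 * χ (z * g) = χ z * χ g := by
  obtain ⟨V, _, _, _, ρ, rfl⟩ := isCharacter_of_mem_irrChar hχ
  obtain ⟨ω, hω⟩ := exists_apply_eq_smul_one_of_mem_center hχ hz
  simp only [character, map_mul, map_one, hω, smul_mul_assoc, one_mul, map_smul, smul_eq_mul]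
  ring

theorem apply_center_mul {ε : ℂ} (hχ : χ ∈ IrrChar H) (hz : z ∈ Subgroup.center H)
    (hε : χ z = ε * χ 1) (g : H) : χ (z * g) = ε * χ g := by
  apply mul_left_cancel₀ (apply_one_ne_zero hχ)
  rw [apply_one_mul_apply_center_mul hχ hz, hε]
  ring

theorem apply_eq_mul_or_eq_neg_mul {ε : ℂ} (hχ : χ ∈ IrrChar H) (hz : z ∈ Subgroup.center H)
    (hz2 : z * z = 1) (hε : ε * ε = 1) : χ z = ε * χ 1 ∨ χ z = -ε * χ 1 := by
  rw [neg_mul, ← mul_self_eq_mul_self_iff, ← apply_one_mul_apply_center_mul hχ hz, hz2]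
  linear_combination (-χ 1 ^ 2) * hε

open Classical in
/-- The irreducible characters lying over the eigenvalue `ε` of `z`. It is used for central `z`,
which acts on an irreducible representation by a scalar; characters detect that scalar as
`χ z / χ 1`. -/
noncomputable def irrOver (z : H) (ε : ℂ) : Finset (H → ℂ) := {χ ∈ irr H | χ z = ε * χ 1}

theorem mem_irrOver {ε : ℂ} : χ ∈ irrOver z ε ↔ χ ∈ IrrChar H ∧ χ z = ε * χ 1 := by
  simp [irrOver, mem_irr]

theorem linearIndepOn_irrOver (z : H) (ε : ℂ) :
    LinearIndepOn ℂ id (irrOver z ε : Set (H → ℂ)) :=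
  linearIndepOn_irrChar.mono fun _ hχ => (mem_irrOver.1 hχ).1

theorem two_mul_sum_irrOver_charDeg_sq {ε : ℂ} (hz : z ∈ Subgroup.center H) (hz1 : z ≠ 1)
    (hz2 : z * z = 1) (hε : ε * ε = 1) :
    2 * ∑ χ ∈ irrOver z ε, charDeg χ ^ 2 = Nat.card H := by
  classical
  have hreg (g : H) : ∑ χ ∈ irr H, χ 1 * χ g = regChar H g := by
    simpa using congrFun (sum_apply_one_smul_eq_regChar (H := H)) g
  have hterm : ∀ χ ∈ irr H, χ 1 * χ 1 + ε * (χ 1 * χ z) =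
      if χ z = ε * χ 1 then 2 * (charDeg χ : ℂ) ^ 2 else 0 := by
    intro χ hχ
    rw [← apply_one_eq_charDeg (mem_irr.1 hχ)]
    split_ifs with h
    · rw [h]
      linear_combination χ 1 ^ 2 * hε
    · rw [(apply_eq_mul_or_eq_neg_mul (mem_irr.1 hχ) hz hz2 hε).resolve_left h]
      linear_combination (-χ 1 ^ 2) * hε
  have hsum := Finset.sum_congr rfl hterm
  rw [Finset.sum_add_distrib, ← Finset.mul_sum, hreg, hreg, ← Finset.sum_filter,
    ← Finset.mul_sum] at hsum
  simp only [regChar, Pi.single_eq_same, Pi.single_eq_of_ne hz1, mul_zero, add_zero] at hsum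
  exact_mod_cast hsum.symm

theorem sum_irr_eq_sum_irrOver_add (hz : z ∈ Subgroup.center H) (hz2 : z * z = 1)
    (f : (H → ℂ) → ℝ) :
    ∑ χ ∈ irr H, f χ = ∑ χ ∈ irrOver z 1, f χ + ∑ χ ∈ irrOver z (-1), f χ := by
  classical
  have hnot : irrOver z (-1) = {χ ∈ irr H | ¬χ z = 1 * χ 1} := by
    refine Finset.filter_congr fun χ hχ => ?_
    have hχ := mem_irr.1 hχ
    refine ⟨fun hneg hone => apply_one_ne_zero hχ ?_,
      (apply_eq_mul_or_eq_neg_mul hχ hz hz2 (one_mul 1)).resolve_left⟩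
    linear_combination (hneg - hone) / 2
  rw [hnot, irrOver, Finset.sum_filter_add_sum_filter_not]

end Center

theorem even_charDeg_of_mem_irrOver_neg_one {χ : H → ℂ} {z : H}
    (hH : commutator H = ⊤) (hz : z ∈ Subgroup.center H) (hχ : χ ∈ irrOver z (-1)) :
    Even (charDeg χ) := by
  obtain ⟨hχ, hneg⟩ := mem_irrOver.1 hχ
  have hdeg := apply_one_eq_charDeg hχ
  have hne := apply_one_ne_zero hχ
  obtain ⟨V, _, _, _, ρ, rfl⟩ := isCharacter_of_mem_irrChar hχ
  obtain ⟨ω, hω⟩ := exists_apply_eq_smul_one_of_mem_center hχ hz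
  have hω' : ω = -1 := by
    apply mul_right_cancel₀ hne
    rw [← hneg, char_one, character, hω, map_smul, LinearMap.trace_one, smul_eq_mul]
  have hV : finrank ℂ V = charDeg ρ.character := by
    rw [char_one] at hdeg
    exact_mod_cast hdeg
  have hdet := det_eq_one_of_commutator_eq_top hH ρ z
  rw [hω, LinearMap.det_smul, map_one, mul_one, hω', hV] at hdet
  exact (neg_one_pow_eq_one_iff_even (by norm_num)).1 hdet

end CharacterTheory

/-! ### Characters of quotients and direct products -/

theorem le_acd_of_sum_nonneg {G : Type} [Group G] [Finite G] {c : ℝ}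
    (h : 0 ≤ ∑ χ ∈ irr G, ((charDeg χ : ℝ) - c)) : c ≤ acd G := by
  have hset : {χ ∈ IrrChar G | True} = (irr G : Set (G → ℂ)) := by
    ext χ
    simp [mem_irr]
  have hpos : 0 < ((irr G).card : ℝ) :=
    Nat.cast_pos.2 (Finset.card_pos.2 ⟨1, mem_irr.2 one_mem_irrChar⟩)
  rw [acd, acdRel, hset, finsum_mem_coe_finset, Set.ncard_coe_finset, le_div_iff₀ hpos]
  rw [Finset.sum_sub_distrib, Finset.sum_const, nsmul_eq_mul] at h
  linarith

section Inflation

attribute [local instance] Fintype.ofFinite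

variable {K G : Type} [Group K] [Group G] [Finite K] [Finite G] {π : K →* G}

theorem inv_card_mul_sum_comp (hπ : Function.Surjective π) (f : G → ℂ) :
    (Nat.card K : ℂ)⁻¹ * ∑ k, f (π k) = (Nat.card G : ℂ)⁻¹ * ∑ g, f g := by
  classical
  have hfiber (f : G → ℂ) : ∑ k, f (π k) = (Finset.card {k | π k = 1} : ℂ) * ∑ g, f g := by
    rw [← Finset.sum_fiberwise' Finset.univ π, Finset.mul_sum]
    refine Finset.sum_congr rfl fun g _ => ?_
    rw [Finset.sum_const, nsmul_eq_mul, MonoidHom.card_fiber_eq_of_mem_range π (hπ g) (hπ 1)]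
  have hcard : (Nat.card K : ℂ) = (Finset.card {k | π k = 1} : ℂ) * Nat.card G := by
    simpa using hfiber 1
  have hN : (Finset.card {k | π k = 1} : ℂ) ≠ 0 :=
    left_ne_zero_of_mul (hcard ▸ natCard_cast_ne_zero)
  rw [hfiber, hcard]
  field_simp

theorem charInner_comp (hπ : Function.Surjective π) (φ ψ : G → ℂ) :
    charInner (φ ∘ π) (ψ ∘ π) = charInner φ ψ := by
  simpa only [charInner_apply, Function.comp_apply, map_inv] using
    inv_card_mul_sum_comp hπ fun g => φ g * ψ g⁻¹

theorem comp_mem_irrChar (hπ : Function.Surjective π) {ψ : G → ℂ} (hψ : ψ ∈ IrrChar G) :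
    ψ ∘ π ∈ IrrChar K := by
  refine mem_irrChar_iff.2 ⟨?_, (charInner_comp hπ ψ ψ).trans (mem_irrChar_iff.1 hψ).2⟩
  obtain ⟨V, _, _, _, ρ, rfl⟩ := isCharacter_of_mem_irrChar hψ
  exact ⟨V, inferInstance, inferInstance, inferInstance, ρ.comp π, rfl⟩

theorem apply_eq_one_of_forall_character_eq {V : Type} [AddCommGroup V] [Module ℂ V]
    [FiniteDimensional ℂ V] {ρ : Representation ℂ K V}
    (hρ : ∀ k, ρ.character k = ρ.character 1) (k : K) : ρ k = 1 := by
  have hrank := card_inv_mul_sum_char_eq_finrank ρ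
  simp only [hρ, char_one, Finset.sum_const, Finset.card_univ, ← Nat.card_eq_fintype_card,
    nsmul_eq_mul, inv_mul_cancel_left₀ natCard_cast_ne_zero] at hrank
  have htop : invariants ρ = ⊤ := Submodule.eq_top_of_finrank_eq (by exact_mod_cast hrank.symm)
  ext v
  exact (mem_invariants ρ v).1 (htop ▸ Submodule.mem_top) k

theorem exists_mem_irrChar_eq_comp (hπ : Function.Surjective π) {χ : K → ℂ}
    (hχ : χ ∈ IrrChar K) (hker : ∀ k ∈ π.ker, χ k = χ 1) : ∃ ψ ∈ IrrChar G, ψ ∘ π = χ := by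
  obtain ⟨⟨V, _, _, _, ρ, rfl⟩, hnorm⟩ := mem_irrChar_iff.1 hχ
  have hρ (k : K) (hk : k ∈ π.ker) : ρ k = 1 :=
    apply_eq_one_of_forall_character_eq (ρ := ρ.comp π.ker.subtype)
      (fun k => hker k k.2) ⟨k, hk⟩
  let e := QuotientGroup.quotientKerEquivOfSurjective π hπ
  let σ : Representation ℂ G V := (QuotientGroup.lift π.ker ρ hρ).comp e.symm.toMonoidHom
  have hσ : σ.character ∘ π = ρ.character := by
    ext k
    have hk : e.symm (π k) = k := e.symm_apply_eq.2 rfl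
    exact congrArg (fun q => LinearMap.trace ℂ V (QuotientGroup.lift π.ker ρ hρ q)) hk
  refine ⟨σ.character, mem_irrChar_iff.2 ⟨⟨V, _, _, inferInstance, σ, rfl⟩, ?_⟩, hσ⟩
  rw [← charInner_comp hπ, hσ, hnorm]

theorem sum_irr_eq_sum_filter_ker [DecidablePred fun χ : K → ℂ => ∀ k ∈ π.ker, χ k = χ 1]
    (hπ : Function.Surjective π) (f : ℕ → ℝ) :
    ∑ ψ ∈ irr G, f (charDeg ψ) = ∑ χ ∈ irr K with ∀ k ∈ π.ker, χ k = χ 1, f (charDeg χ) := by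
  refine Finset.sum_nbij (· ∘ π) (fun ψ hψ => ?_) hπ.injective_comp_right.injOn
    (fun χ hχ => ?_) fun ψ _ => by simp [charDeg]
  · refine Finset.mem_filter.2 ⟨mem_irr.2 (comp_mem_irrChar hπ (mem_irr.1 hψ)), fun k hk => ?_⟩
    simp [MonoidHom.mem_ker.1 hk]
  · obtain ⟨hχ, hker⟩ := Finset.mem_filter.1 hχ
    obtain ⟨ψ, hψ, rfl⟩ := exists_mem_irrChar_eq_comp hπ (mem_irr.1 hχ) hker
    exact ⟨ψ, mem_irr.2 hψ, rfl⟩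

end Inflation

theorem fst_mem_center_of_mem_ker {A B G : Type*} [Group A] [Group B] [Group G] {π : A × B →* G}
    (hinj : Function.Injective (π.comp (MonoidHom.inl A B))) {x : A × B} (hx : x ∈ π.ker) :
    x.1 ∈ Subgroup.center A := by
  have hx1 : π (x.1, 1) = π (1, x.2⁻¹) := by
    rw [← mul_inv_eq_one, ← map_inv, ← map_mul]
    simpa using hx
  refine Subgroup.mem_center_iff.2 fun a => hinj ?_
  simp only [MonoidHom.comp_apply, MonoidHom.inl_apply, map_mul, hx1]
  rw [← map_mul, ← map_mul, Prod.mk_mul_mk, Prod.mk_mul_mk, one_mul, mul_one, one_mul, mul_one]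

section Prod

variable {A B : Type}

/-- The external product of two functions; on characters, the character of the external tensor
product of the representations. -/
def extProd (α : A → ℂ) (β : B → ℂ) : A × B → ℂ := fun x => α x.1 * β x.2

variable [Group A] [Group B]

theorem isCharacter_extProd {α : A → ℂ} {β : B → ℂ} (hα : IsCharacter α) (hβ : IsCharacter β) :
    IsCharacter (extProd α β) := by
  obtain ⟨V, _, _, _, ρ, rfl⟩ := hα
  obtain ⟨W, _, _, _, σ, rfl⟩ := hβ
  exact ⟨TensorProduct ℂ V W, inferInstance, inferInstance, inferInstance,
    tprod (ρ.comp (MonoidHom.fst A B)) (σ.comp (MonoidHom.snd A B)),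
    by rw [char_tensor]; rfl⟩

theorem regChar_prod : regChar (A × B) = extProd (regChar A) (regChar B) := by
  classical
  ext ⟨a, b⟩
  by_cases ha : a = 1 <;> by_cases hb : b = 1 <;>
    simp [regChar, extProd, Pi.single_apply, Prod.ext_iff, ha, hb]

variable [Finite A] [Finite B]

attribute [local instance] Fintype.ofFinite in
theorem charInner_extProd (α α' : A → ℂ) (β β' : B → ℂ) :
    charInner (extProd α β) (extProd α' β') = charInner α α' * charInner β β' := by
  simp only [charInner_apply, extProd, Nat.card_prod, Nat.cast_mul, mul_inv, Prod.fst_inv,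
    Prod.snd_inv]
  rw [mul_mul_mul_comm _ (∑ a, _), Finset.sum_mul_sum, ← Fintype.sum_prod_type']
  simp only [mul_mul_mul_comm]
  congr!

theorem extProd_mem_irrChar {α : A → ℂ} {β : B → ℂ} (hα : α ∈ IrrChar A) (hβ : β ∈ IrrChar B) :
    extProd α β ∈ IrrChar (A × B) :=
  mem_irrChar_iff.2 ⟨isCharacter_extProd (isCharacter_of_mem_irrChar hα)
    (isCharacter_of_mem_irrChar hβ), by
    rw [charInner_extProd, (mem_irrChar_iff.1 hα).2, (mem_irrChar_iff.1 hβ).2, one_mul]⟩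

theorem exists_eq_extProd_of_mem_irrChar {χ : A × B → ℂ} (hχ : χ ∈ IrrChar (A × B)) :
    ∃ α ∈ IrrChar A, ∃ β ∈ IrrChar B, extProd α β = χ := by
  by_contra! h
  have hreg : regChar (A × B) =
      ∑ α ∈ irr A, ∑ β ∈ irr B, (α 1 * β 1) • extProd α β := by
    rw [regChar_prod, ← sum_apply_one_smul_eq_regChar, ← sum_apply_one_smul_eq_regChar]
    ext x
    simp only [extProd, Finset.sum_apply,
      Pi.smul_apply, smul_eq_mul, Finset.sum_mul_sum, mul_mul_mul_comm]
  apply apply_one_ne_zero hχ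
  rw [← charInner_regChar χ, hreg]
  simp only [map_sum, map_smul, LinearMap.sum_apply, LinearMap.smul_apply]
  refine Finset.sum_eq_zero fun α hα => Finset.sum_eq_zero fun β hβ => ?_
  rw [mem_irr] at hα hβ
  rw [charInner_eq_zero_of_ne (extProd_mem_irrChar hα hβ) hχ (h α hα β hβ), smul_zero]

theorem extProd_injOn :
    Set.InjOn (fun p : (A → ℂ) × (B → ℂ) => extProd p.1 p.2) (IrrChar A ×ˢ IrrChar B) := by
  rintro ⟨α, β⟩ ⟨hα, hβ⟩ ⟨α', β'⟩ ⟨hα', hβ'⟩ h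
  have hinner : charInner α α' * charInner β β' = 1 := by
    rw [← charInner_extProd, show extProd α β = extProd α' β' from h,
      (mem_irrChar_iff.1 (extProd_mem_irrChar hα' hβ')).2]
  by_contra hne
  rcases not_and_or.1 (mt Prod.ext_iff.2 hne) with hne | hne
  · simp [charInner_eq_zero_of_ne hα hα' hne] at hinner
  · simp [charInner_eq_zero_of_ne hβ hβ' hne] at hinner

theorem sum_irr_prod (f : (A × B → ℂ) → ℝ) :
    ∑ χ ∈ irr (A × B), f χ = ∑ β ∈ irr B, ∑ α ∈ irr A, f (extProd α β) := by
  rw [← Finset.sum_product_right']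
  symm
  refine Finset.sum_nbij (fun p => extProd p.1 p.2) (fun p hp => ?_) (extProd_injOn.mono ?_)
    (fun χ hχ => ?_) fun _ _ => rfl
  · obtain ⟨hα, hβ⟩ := Finset.mem_product.1 hp
    exact mem_irr.2 (extProd_mem_irrChar (mem_irr.1 hα) (mem_irr.1 hβ))
  · intro p hp
    simpa [mem_irr] using hp
  · obtain ⟨α, hα, β, hβ, rfl⟩ := exists_eq_extProd_of_mem_irrChar (mem_irr.1 hχ)
    exact ⟨(α, β), by simp [mem_irr, hα, hβ], rfl⟩

theorem charDeg_extProd {α : A → ℂ} {β : B → ℂ} (hα : α ∈ IrrChar A) (hβ : β ∈ IrrChar B) :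
    charDeg (extProd α β) = charDeg α * charDeg β := by
  have h := apply_one_eq_charDeg (extProd_mem_irrChar hα hβ)
  rw [extProd, Prod.fst_one, Prod.snd_one, apply_one_eq_charDeg hα, apply_one_eq_charDeg hβ] at h
  exact_mod_cast h.symm

open Classical in
theorem le_acd_of_surjective_prod {G : Type} [Group G] [Finite G] {π : A × B →* G}
    (hπ : Function.Surjective π) {c : ℝ}
    (h : ∀ β ∈ IrrChar B, 0 ≤ ∑ α ∈ irr A with ∀ x ∈ π.ker, extProd α β x = extProd α β 1,
      ((charDeg α : ℝ) - c)) : c ≤ acd G := by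
  apply le_acd_of_sum_nonneg
  rw [sum_irr_eq_sum_filter_ker hπ fun d => (d : ℝ) - c, Finset.sum_filter, sum_irr_prod]
  simp only [← Finset.sum_filter]
  refine Finset.sum_nonneg fun β hβ => (h β (mem_irr.1 hβ)).trans
    (Finset.sum_le_sum fun α hα => sub_le_sub_right ?_ c)
  rw [charDeg_extProd (mem_irr.1 (Finset.mem_filter.1 hα).1) (mem_irr.1 hβ)]
  exact_mod_cast Nat.le_mul_of_pos_right _ (charDeg_pos (mem_irr.1 hβ))

end Prod

/-! ### Degree sums -/

section Arithmetic

variable {ι : Type*} {S : Finset ι} {d : ι → ℕ}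

-- Sums `0 ≤ (d i - a) * (b - d i)`, with both sides moved so that no subtraction occurs.
theorem sum_sq_add_le {a b : ℕ} (h : ∀ i ∈ S, a ≤ d i ∧ d i ≤ b) :
    ∑ i ∈ S, d i ^ 2 + a * b * S.card ≤ (a + b) * ∑ i ∈ S, d i := by
  rw [Finset.mul_sum, mul_comm, ← smul_eq_mul, ← Finset.sum_const, ← Finset.sum_add_distrib]
  refine Finset.sum_le_sum fun i hi => ?_
  obtain ⟨p, hp⟩ := Nat.exists_eq_add_of_le (h i hi).1
  obtain ⟨q, hq⟩ := Nat.exists_eq_add_of_le (h i hi).2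
  subst hq
  rw [hp]
  nlinarith [Nat.zero_le (p * q)]

theorem sum_le_of_sum_sq_eq_sixty_of_even (heven : ∀ i ∈ S, Even (d i))
    (hpos : ∀ i ∈ S, 0 < d i) (hsq : ∑ i ∈ S, d i ^ 2 = 60) (hcard : S.card ≤ 4) :
    16 * S.card ≤ 5 * ∑ i ∈ S, d i := by
  have hbound : ∀ i ∈ S, 2 ≤ d i ∧ d i ≤ 6 := by
    intro i hi
    have hle : d i ^ 2 ≤ 60 := hsq ▸
      Finset.single_le_sum (f := fun i => d i ^ 2) (fun _ _ => Nat.zero_le _) hi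
    obtain ⟨k, hk⟩ := heven i hi
    have := hpos i hi
    have : d i < 8 := by nlinarith
    omega
  have := sum_sq_add_le hbound
  omega

theorem sum_le_of_sum_sq_eq_sixty_of_eq_one [DecidableEq ι] {i₀ : ι} (hi₀ : i₀ ∈ S)
    (hone : d i₀ = 1) (htwo : ∀ i ∈ S.erase i₀, 2 ≤ d i) (hsq : ∑ i ∈ S, d i ^ 2 = 60)
    (hcard : S.card ≤ 5) : 16 * S.card ≤ 5 * ∑ i ∈ S, d i := by
  set T := S.erase i₀ with hT
  rw [← Finset.add_sum_erase S _ hi₀, hone, ← hT] at hsq ⊢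
  rw [← Finset.card_erase_add_one hi₀, ← hT] at hcard ⊢
  replace hsq : ∑ i ∈ T, d i ^ 2 = 59 := by omega
  have hle : ∀ i ∈ T, d i ^ 2 ≤ 59 := fun i hi =>
    hsq ▸ Finset.single_le_sum (f := fun i => d i ^ 2) (fun _ _ => Nat.zero_le _) hi
  have hseven := sum_sq_add_le fun i hi => ⟨htwo i hi, show d i ≤ 7 by nlinarith [hle i hi]⟩
  rcases Nat.lt_or_ge T.card 4 with hlt | hge
  · interval_cases T.card <;> omega
  have hsix : ∀ i ∈ T, 2 ≤ d i ∧ d i ≤ 6 := by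
    intro i hi
    refine ⟨htwo i hi, ?_⟩
    by_contra! hgt
    have hrest : ∀ j ∈ T.erase i, 2 ^ 2 ≤ d j ^ 2 := fun j hj =>
      Nat.pow_le_pow_left (htwo j (Finset.mem_of_mem_erase hj)) 2
    have := Finset.card_nsmul_le_sum _ _ _ hrest
    rw [Finset.card_erase_of_mem hi, smul_eq_mul] at this
    rw [← Finset.add_sum_erase T _ hi] at hsq
    nlinarith [Nat.sub_add_cancel (show 1 ≤ T.card by omega)]
  -- Four numbers between `2` and `6` with square sum `59` have sum at least `14`, and `14` has the
  -- wrong parity.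
  have hsum := sum_sq_add_le hsix
  have hparity : (∑ i ∈ T, d i ^ 2 + ∑ i ∈ T, d i) % 2 = 0 := by
    rw [← Finset.sum_add_distrib, ← Nat.even_iff]
    exact Finset.even_sum _ fun i _ => by simp [Nat.even_add, Nat.even_pow]
  omega

end Arithmetic

/-! ### The group `SL(2, 5)` and its characters -/

section SpecialLinearTwo

open scoped MatrixGroups

section Companion

variable {R : Type*} [CommRing R]

/-- The matrix of determinant `1` and trace `t` that sends the first basis vector to `δ` times the
second. Over a field these represent all conjugacy classes of non-scalar elements. -/
def companion (δ : Rˣ) (t : R) : SL(2, R) :=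
  ⟨!![0, -(↑δ⁻¹ : R); δ, t], by simp [Matrix.det_fin_two]⟩

/-- The determinant of the matrix with columns `v` and `g v`, for `v = (x, y)`: a quadratic form in
`v` whose unit values are the `δ` for which `g` is conjugate to `companion δ (g 0 0 + g 1 1)`. -/
def cyclicDet (g : SL(2, R)) (x y : R) : R :=
  x * (g 1 0 * x + g 1 1 * y) - y * (g 0 0 * x + g 0 1 * y)

-- Conjugate by the matrix with columns `v` and `δ⁻¹ g v`; the second column of the identity is
-- Cayley-Hamilton.
theorem isConj_companion_of_cyclicDet_eq {g : SL(2, R)} {δ : Rˣ} {x y : R}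
    (h : cyclicDet g x y = δ) : IsConj (companion δ (g 0 0 + g 1 1)) g := by
  induction g using Matrix.SpecialLinearGroup.fin_two_induction with | _ a b c d hdet
  change x * (c * x + d * y) - y * (a * x + b * y) = δ at h
  have hδ : (δ : R) * ↑δ⁻¹ = 1 := δ.mul_inv
  let P : Matrix (Fin 2) (Fin 2) R :=
    !![x, ↑δ⁻¹ * (a * x + b * y); y, ↑δ⁻¹ * (c * x + d * y)]
  have hP : P.det = 1 := by
    rw [Matrix.det_fin_two_of]
    linear_combination ↑δ⁻¹ * h + hδ
  suffices hconj : P * !![0, -(↑δ⁻¹ : R); ↑δ, a + d] = !![a, b; c, d] * P from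
    isConj_iff.2 ⟨⟨P, hP⟩, mul_inv_eq_iff_eq_mul.2 (Subtype.ext hconj)⟩
  simp only [P, Matrix.mul_fin_two, ← Matrix.ext_iff, Fin.forall_fin_two, Matrix.of_apply,
    Matrix.cons_val_zero, Matrix.cons_val_one]
  refine ⟨⟨?_, ?_⟩, ?_, ?_⟩
  · linear_combination (a * x + b * y) * hδ
  · linear_combination ↑δ⁻¹ * x * hdet
  · linear_combination (c * x + d * y) * hδ
  · linear_combination ↑δ⁻¹ * y * hdet

end Companion

/-- Representatives for the elements of `SL(2, 5)` up to conjugation and sign, except for the class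
of `companion 1 0`, whose elements are conjugate to their negatives. -/
def classReps : Finset SL(2, ZMod 5) :=
  {1, companion 1 1, companion 1 2, companion (ZMod.unitOfCoprime 2 (by decide)) 2}

theorem exists_isConj_mem_classReps_of_trace {g : SL(2, ZMod 5)}
    (ht : g 0 0 + g 1 1 = 0 ∨ g 0 0 + g 1 1 = 1 ∨ g 0 0 + g 1 1 = 2) :
    ∃ r ∈ insert (companion 1 0) classReps, IsConj r g := by
  have hform : ∀ g : SL(2, ZMod 5),
      (g 0 0 + g 1 1 = 0 → ∃ x y, cyclicDet g x y = 1) ∧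
      (g 0 0 + g 1 1 = 1 → ∃ x y, cyclicDet g x y = 1) ∧
      (g 0 0 + g 1 1 = 2 → g = 1 ∨ (∃ x y, cyclicDet g x y = 1) ∨
        ∃ x y, cyclicDet g x y = 2) := by
    decide +kernel
  obtain ⟨h0, h1, h2⟩ := hform g
  have hconj (δ : (ZMod 5)ˣ) {t x y : ZMod 5} (ht : g 0 0 + g 1 1 = t)
      (h : cyclicDet g x y = δ) : IsConj (companion δ t) g :=
    ht ▸ isConj_companion_of_cyclicDet_eq h
  rcases ht with ht | ht | ht
  · obtain ⟨x, y, h⟩ := h0 ht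
    exact ⟨_, by simp, hconj 1 ht h⟩
  · obtain ⟨x, y, h⟩ := h1 ht
    exact ⟨_, by simp [classReps], hconj 1 ht h⟩
  · obtain rfl | ⟨x, y, h⟩ | ⟨x, y, h⟩ := h2 ht
    · exact ⟨1, by simp [classReps], IsConj.refl 1⟩
    · exact ⟨_, by simp [classReps], hconj 1 ht h⟩
    · exact ⟨_, by simp [classReps], hconj (ZMod.unitOfCoprime 2 (by decide)) ht h⟩

theorem exists_isConj_or_isConj_neg_mem_classReps (g : SL(2, ZMod 5)) :
    ∃ r ∈ insert (companion 1 0) classReps, IsConj r g ∨ IsConj r (-g) := by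
  have hneg : (-g) 0 0 + (-g) 1 1 = -(g 0 0 + g 1 1) := (neg_add _ _).symm
  have htrace : ∀ t : ZMod 5, (t = 0 ∨ t = 1 ∨ t = 2) ∨ (-t = 0 ∨ -t = 1 ∨ -t = 2) := by decide
  rcases htrace (g 0 0 + g 1 1) with ht | ht
  · obtain ⟨r, hr, h⟩ := exists_isConj_mem_classReps_of_trace ht
    exact ⟨r, hr, Or.inl h⟩
  · obtain ⟨r, hr, h⟩ := exists_isConj_mem_classReps_of_trace (hneg ▸ ht)
    exact ⟨r, hr, Or.inr h⟩

theorem isConj_companion_neg : IsConj (companion (1 : (ZMod 5)ˣ) 0) (-companion 1 0) := by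
  decide +kernel

theorem natCard_SL25 : Nat.card SL(2, ZMod 5) = 120 := by
  rw [Nat.card_eq_fintype_card]
  decide +kernel

theorem commutator_SL25_eq_top : commutator SL(2, ZMod 5) = ⊤ := by
  have h0 : (2 : ZMod 5) ≠ 0 := by decide
  have h1 : (2 : ZMod 5) ^ 2 ≠ 1 := by decide
  have := Fact.mk Nat.prime_five
  exact Matrix.SL2.commutator_eq_top h0 h1

theorem eq_one_or_eq_neg_one_of_mem_center_SL25 {g : SL(2, ZMod 5)}
    (hg : g ∈ Subgroup.center SL(2, ZMod 5)) : g = 1 ∨ g = -1 := by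
  have := Fact.mk Nat.prime_five
  obtain ⟨r, hr, hrg⟩ := Matrix.SpecialLinearGroup.mem_center_iff.1 hg
  rcases sq_eq_one_iff.1 hr with rfl | rfl
  · exact Or.inl (Subtype.ext (by simp [← hrg]))
  · exact Or.inr (Subtype.ext (by rw [← hrg, map_neg, map_one]; rfl))

theorem neg_one_mem_center_SL25 : (-1 : SL(2, ZMod 5)) ∈ Subgroup.center SL(2, ZMod 5) :=
  Subgroup.mem_center_iff.2 fun g => by simp

end SpecialLinearTwo

section CharactersSL25

open scoped MatrixGroups

theorem apply_neg_of_mem_irrOver {ε : ℂ} {χ : SL(2, ZMod 5) → ℂ} (hχ : χ ∈ irrOver (-1) ε)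
    (g : SL(2, ZMod 5)) : χ (-g) = ε * χ g := by
  obtain ⟨hχ, hε⟩ := mem_irrOver.1 hχ
  simpa using apply_center_mul hχ neg_one_mem_center_SL25 hε g

theorem sum_charDeg_sq_SL25 {ε : ℂ} (hε : ε * ε = 1) :
    ∑ χ ∈ irrOver (-1 : SL(2, ZMod 5)) ε, charDeg χ ^ 2 = 60 := by
  have h := two_mul_sum_irrOver_charDeg_sq neg_one_mem_center_SL25 (by decide) (by simp)
    hε
  rw [natCard_SL25] at h
  omega

theorem exists_forall_mem_irrOver_eq_mul {ε : ℂ} (hε : ε * ε = 1) (g : SL(2, ZMod 5)) :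
    ∃ r ∈ insert (companion 1 0) classReps, ∃ s, ∀ χ ∈ irrOver (-1) ε, χ g = s * χ r := by
  obtain ⟨r, hr, h | h⟩ := exists_isConj_or_isConj_neg_mem_classReps g
  · refine ⟨r, hr, 1, fun χ hχ => ?_⟩
    rw [one_mul, (isCharacter_of_mem_irrChar (mem_irrOver.1 hχ).1).apply_eq_of_isConj h]
  · refine ⟨r, hr, ε, fun χ hχ => ?_⟩
    rw [(isCharacter_of_mem_irrChar (mem_irrOver.1 hχ).1).apply_eq_of_isConj h,
      apply_neg_of_mem_irrOver hχ, ← mul_assoc, hε, one_mul]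

theorem apply_companion_eq_zero {χ : SL(2, ZMod 5) → ℂ} (hχ : χ ∈ irrOver (-1) (-1)) :
    χ (companion 1 0) = 0 := by
  have h := (isCharacter_of_mem_irrChar (mem_irrOver.1 hχ).1).apply_eq_of_isConj
    isConj_companion_neg
  rw [apply_neg_of_mem_irrOver hχ] at h
  linear_combination h / 2

theorem card_irrOver_one_le : (irrOver (-1 : SL(2, ZMod 5)) 1).card ≤ 5 :=
  (card_le_card_of_forall_eq_mul (linearIndepOn_irrOver (-1) 1)
    (exists_forall_mem_irrOver_eq_mul (one_mul 1))).trans Finset.card_le_five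

theorem card_irrOver_neg_one_le : (irrOver (-1 : SL(2, ZMod 5)) (-1)).card ≤ 4 := by
  refine (card_le_card_of_forall_eq_mul (R := classReps) (linearIndepOn_irrOver (-1) (-1))
    fun g => ?_).trans Finset.card_le_four
  obtain ⟨r, hr, s, h⟩ := exists_forall_mem_irrOver_eq_mul (ε := -1) (by ring) g
  rcases Finset.mem_insert.1 hr with rfl | hr
  · exact ⟨1, by simp [classReps], 0, fun χ hχ => by
      rw [h χ hχ, apply_companion_eq_zero hχ, mul_zero, zero_mul]⟩
  · exact ⟨r, hr, s, h⟩

theorem card_irrOver_one_mul_le_sum_charDeg :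
    16 * (irrOver (-1 : SL(2, ZMod 5)) 1).card ≤
      5 * ∑ χ ∈ irrOver (-1 : SL(2, ZMod 5)) 1, charDeg χ := by
  classical
  have hone : charDeg (1 : SL(2, ZMod 5) → ℂ) = 1 := by simp [charDeg]
  refine sum_le_of_sum_sq_eq_sixty_of_eq_one (mem_irrOver.2 ⟨one_mem_irrChar, by simp⟩) hone
    (fun χ hχ => ?_) (sum_charDeg_sq_SL25 (one_mul 1)) card_irrOver_one_le
  obtain ⟨hne, hχ⟩ := Finset.mem_erase.1 hχ
  have hχ := (mem_irrOver.1 hχ).1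
  have := charDeg_pos hχ
  have : charDeg χ ≠ 1 := fun h =>
    hne (eq_one_of_charDeg_eq_one commutator_SL25_eq_top (isCharacter_of_mem_irrChar hχ) h)
  omega

theorem card_irrOver_neg_one_mul_le_sum_charDeg :
    16 * (irrOver (-1 : SL(2, ZMod 5)) (-1)).card ≤
      5 * ∑ χ ∈ irrOver (-1 : SL(2, ZMod 5)) (-1), charDeg χ :=
  sum_le_of_sum_sq_eq_sixty_of_even
    (fun _ hχ => even_charDeg_of_mem_irrOver_neg_one commutator_SL25_eq_top
      neg_one_mem_center_SL25 hχ)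
    (fun _ hχ => charDeg_pos (mem_irrOver.1 hχ).1) (sum_charDeg_sq_SL25 (by ring))
    card_irrOver_neg_one_le

theorem sum_irrOver_charDeg_sub_nonneg {ε : ℂ} (hε : ε = 1 ∨ ε = -1) :
    0 ≤ ∑ χ ∈ irrOver (-1 : SL(2, ZMod 5)) ε, ((charDeg χ : ℝ) - 16 / 5) := by
  have h : 16 * (irrOver (-1 : SL(2, ZMod 5)) ε).card ≤
      5 * ∑ χ ∈ irrOver (-1 : SL(2, ZMod 5)) ε, charDeg χ := by
    rcases hε with rfl | rfl
    · exact card_irrOver_one_mul_le_sum_charDeg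
    · exact card_irrOver_neg_one_mul_le_sum_charDeg
  have h : (16 : ℝ) * (irrOver (-1 : SL(2, ZMod 5)) ε).card ≤
      5 * ∑ χ ∈ irrOver (-1 : SL(2, ZMod 5)) ε, (charDeg χ : ℝ) := by
    exact_mod_cast h
  rw [Finset.sum_sub_distrib, Finset.sum_const, nsmul_eq_mul]
  linarith

theorem extProd_eq_iff_of_mem_irrOver {B : Type} [Group B] {ε : ℂ} {α α' : SL(2, ZMod 5) → ℂ}
    (hα : α ∈ irrOver (-1) ε) (hα' : α' ∈ irrOver (-1) ε) (β : B → ℂ) {x : SL(2, ZMod 5) × B}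
    (hx : x.1 ∈ Subgroup.center SL(2, ZMod 5)) :
    extProd α β x = extProd α β 1 ↔ extProd α' β x = extProd α' β 1 := by
  obtain ⟨s, hs⟩ : ∃ s, ∀ γ ∈ irrOver (-1) ε, γ x.1 = s * γ 1 := by
    rcases eq_one_or_eq_neg_one_of_mem_center_SL25 hx with h | h
    · exact ⟨1, fun γ _ => by rw [h, one_mul]⟩
    · exact ⟨ε, fun γ hγ => by rw [h, (mem_irrOver.1 hγ).2]⟩
  have hiff : ∀ γ ∈ irrOver (-1) ε, extProd γ β x = extProd γ β 1 ↔ s * β x.2 = β 1 := by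
    intro γ hγ
    rw [extProd, extProd, hs γ hγ, mul_right_comm, mul_comm, Prod.fst_one, Prod.snd_one]
    exact mul_right_inj' (apply_one_ne_zero (mem_irrOver.1 hγ).1)
  rw [hiff α hα, hiff α' hα']

theorem le_acd_of_surjective_prod_SL25 {B G : Type} [Group B] [Finite B] [Group G] [Finite G]
    {π : SL(2, ZMod 5) × B →* G} (hπ : Function.Surjective π)
    (hinj : Function.Injective (π.comp (MonoidHom.inl _ _))) : 16 / 5 ≤ acd G := by
  have hiff (β : B → ℂ) (ε : ℂ) : ∀ α ∈ irrOver (-1) ε, ∀ α' ∈ irrOver (-1) ε,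
      (∀ x ∈ π.ker, extProd α β x = extProd α β 1) ↔
        ∀ x ∈ π.ker, extProd α' β x = extProd α' β 1 :=
    fun α hα α' hα' => forall₂_congr fun x hx =>
      extProd_eq_iff_of_mem_irrOver hα hα' β (fst_mem_center_of_mem_ker hinj hx)
  refine le_acd_of_surjective_prod hπ fun β _ => ?_
  rw [Finset.sum_filter, sum_irr_eq_sum_irrOver_add neg_one_mem_center_SL25 (by simp),
    ← Finset.sum_filter, ← Finset.sum_filter]
  exact add_nonneg
    (sum_filter_nonneg_of_forall_iff (hiff β 1) (sum_irrOver_charDeg_sub_nonneg (Or.inl rfl)))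
    (sum_filter_nonneg_of_forall_iff (hiff β (-1)) (sum_irrOver_charDeg_sub_nonneg (Or.inr rfl)))

end CharactersSL25

theorem acd_ge_of_central_product_SL25_general (G : Type) [Group G] [Finite G] (M C : Subgroup G)
    (hprod : ∀ g : G, ∃ m ∈ M, ∃ c ∈ C, g = m * c)
    (hcomm : ∀ m ∈ M, ∀ c ∈ C, m * c = c * m)
    (hM : Nonempty (M ≃* Matrix.SpecialLinearGroup (Fin 2) (ZMod 5))) :
    16 / 5 ≤ acd G := by
  obtain ⟨e⟩ := hM
  let f : Matrix.SpecialLinearGroup (Fin 2) (ZMod 5) →* G := M.subtype.comp e.symm.toMonoidHom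
  let π := f.noncommCoprod C.subtype fun m c => hcomm _ (e.symm m).2 _ c.2
  have hf : π.comp (MonoidHom.inl _ _) = f := MonoidHom.noncommCoprod_comp_inl ..
  have hπ : Function.Surjective π := by
    intro g
    obtain ⟨m, hm, c, hc, rfl⟩ := hprod g
    exact ⟨(e ⟨m, hm⟩, ⟨c, hc⟩), by simp [π, f]⟩
  refine le_acd_of_surjective_prod_SL25 hπ ?_
  rw [hf]
  exact M.subtype_injective.comp e.symm.injective

/-- If the finite group `G` is a central product `G = MC` with `M ≅ SL(2,5)` and
`M ∩ C = Z(M)`, then `acd(G) ≥ 16/5`. -/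
theorem acd_ge_of_central_product_SL25 (G : Type) [Group G] [Finite G] (M C : Subgroup G)
    (hprod : ∀ g : G, ∃ m ∈ M, ∃ c ∈ C, g = m * c)
    (hcomm : ∀ m ∈ M, ∀ c ∈ C, m * c = c * m)
    (hM : Nonempty (M ≃* Matrix.SpecialLinearGroup (Fin 2) (ZMod 5)))
    (hZ : M ⊓ C = (Subgroup.center ↥M).map M.subtype) :
    16 / 5 ≤ acd G :=
  acd_ge_of_central_product_SL25_general G M C hprod hcomm hM
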